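/- Let V = ℂ² with G = SL(2,ℂ) acting by left matrix multiplication, and let R_d be the space of binary forms of degree d with the induced G-action (g·p)(v) = p(g⁻¹·v). For every m, d ≥ 1, the dimension of the space T^m(R_d^*)^G of G-invariant m-linear forms on R_d equals the number of m-partite noncrossing pair partitions of the set {1, 2, ..., md} (with respect to the consecutive intervals of length d). -/

import Mathlib

/-!
Since `SL(2, ℂ)` is generated by its transvections, which form two one-parameter subgroups, an
`m`-linear form is invariant if and only if it is killed by the derivation action of the raising
and the lowering operator of `𝔰𝔩₂`. On a finite-dimensional representation the joint kernel of these
two operators is the kernel of the raising operator on the space of weight `0`, and this operator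
maps onto the space of weight `2`; so the dimension of the invariants is the difference of the
multiplicities of the weights `0` and `2`. These multiplicities count the lattice paths of `m`
stages, each consisting of `k` down steps followed by `d - k` up steps, by their final height, and
the symmetry of the multiplicities turns the difference into the number of those paths that stay
nonnegative and end at `0`. Such a path is a Dyck word, whose arcs form a noncrossing pair
partition; all down steps precede all up steps in every stage exactly when no arc has both ends
in one stage.
-/

/-- The binary form of degree `d` with (normalized) coefficients `ξ`, evaluated at the
vector `v ∈ ℂ²`:  `p_ξ(v) = Σ_{k=0}^{d} binom(d,k) ξ_k v₀^k v₁^{d−k}`.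
The coefficient vector `ξ : Fin (d+1) → ℂ` is a faithful model of the space `R_d`
of binary forms of degree `d`. -/
noncomputable def Pval (d : ℕ) (ξ : Fin (d + 1) → ℂ) (v : Fin 2 → ℂ) : ℂ :=
  ∑ k : Fin (d + 1), (d.choose (k : ℕ) : ℂ) * ξ k * v 0 ^ (k : ℕ) * v 1 ^ (d - (k : ℕ))

/-- The space `T^m(R_d^*)^G` of `SL(2,ℂ)`-invariant `m`-linear forms on the space `R_d`
of binary forms of degree `d` (modelled by coefficient vectors in `Fin (d+1) → ℂ`).
Invariance of `F` means `F(g·p₁, ..., g·p_m) = F(p₁, ..., p_m)` for every `g ∈ SL(2,ℂ)`,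
where `(g·p)(v) = p(g⁻¹·v)`; here `g·p_{ξ i} = p_{η i}` is expressed through the
evaluations `Pval`. -/
noncomputable def invariantForms (d m : ℕ) :
    Submodule ℂ (MultilinearMap ℂ (fun _ : Fin m => (Fin (d + 1) → ℂ)) ℂ) where
  carrier := {F | ∀ g : Matrix.SpecialLinearGroup (Fin 2) ℂ,
    ∀ ξ η : Fin m → (Fin (d + 1) → ℂ),
      (∀ i v, Pval d (η i) v = Pval d (ξ i)
          (((g⁻¹ : Matrix.SpecialLinearGroup (Fin 2) ℂ) : Matrix (Fin 2) (Fin 2) ℂ).mulVec v)) →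
      F η = F ξ}
  add_mem' := by
    intro F G hF hG g ξ η h
    simp only [MultilinearMap.add_apply, hF g ξ η h, hG g ξ η h]
  zero_mem' := by intro g ξ η h; simp
  smul_mem' := by
    intro c F hF g ξ η h
    simp only [MultilinearMap.smul_apply, hF g ξ η h]

/-- `i` and `j` lie in the same block of the partition `π`. -/
def SameBlock {n : ℕ} (π : Finpartition (Finset.univ : Finset (Fin n))) (i j : Fin n) : Prop :=
  ∃ B ∈ π.parts, i ∈ B ∧ j ∈ B

/-- A partition of `{1, ..., n}` is noncrossing if there are no
`i < i' < j < j'` with `i ~ j`, `i' ~ j'` and `i ≁ i'`. -/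
def IsNoncrossing {n : ℕ} (π : Finpartition (Finset.univ : Finset (Fin n))) : Prop :=
  ∀ i i' j j' : Fin n, i < i' → i' < j → j < j' →
    SameBlock π i j → SameBlock π i' j' → SameBlock π i i'

/-- A pair partition: every block has exactly two elements. -/
def IsPairPartition {n : ℕ} (π : Finpartition (Finset.univ : Finset (Fin n))) : Prop :=
  ∀ B ∈ π.parts, B.card = 2

/-- An `m`-partite partition (with respect to the consecutive intervals of length `d`):
every block contains at most one element from each interval
`{kd+1, ..., (k+1)d}` (0-indexed: the elements `i` with `i / d = k`). -/
def IsMPartite {n : ℕ} (d : ℕ) (π : Finpartition (Finset.univ : Finset (Fin n))) : Prop :=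
  ∀ B ∈ π.parts, ∀ k : ℕ, (B.filter (fun i : Fin n => (i : ℕ) / d = k)).card ≤ 1

open Module Function

section SlTwo

open LieModule Module.End

variable {R L M : Type*} [CommRing R] [LieRing L] [LieAlgebra R L] [AddCommGroup M] [Module R M]
  [LieRingModule L M] [LieModule R L M] {h e f : L}

lemma lie_e_mem_eigenspace (t : IsSl2Triple h e f) {μ : R} {c : M}
    (hc : c ∈ (toEnd R L M h).eigenspace μ) :
    ⁅e, c⁆ ∈ (toEnd R L M h).eigenspace (μ + 2) := by
  rw [mem_eigenspace_iff, toEnd_apply_apply] at hc ⊢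
  simpa using t.lie_h_pow_toEnd_e hc 1

lemma lie_f_mem_eigenspace (t : IsSl2Triple h e f) {μ : R} {c : M}
    (hc : c ∈ (toEnd R L M h).eigenspace μ) :
    ⁅f, c⁆ ∈ (toEnd R L M h).eigenspace (μ - 2) := by
  rw [mem_eigenspace_iff, toEnd_apply_apply] at hc ⊢
  rw [leibniz_lie, hc, t.lie_lie_smul_f R, neg_lie, smul_lie, lie_smul, neg_add_eq_sub, sub_smul]

lemma lie_f_pow_succ_toEnd_e (t : IsSl2Triple h e f) {μ : R} {c : M} (hc : ⁅h, c⁆ = μ • c)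
    (hefc : ⁅e, ⁅f, c⁆⁆ = 0) (k : ℕ) :
    ⁅f, (toEnd R L M e ^ (k + 1)) c⁆ = -((k + 1) * (μ + k)) • (toEnd R L M e ^ k) c := by
  have lie_f_e (x : M) : ⁅f, ⁅e, x⁆⁆ = ⁅e, ⁅f, x⁆⁆ - ⁅h, x⁆ := by
    rw [← t.lie_e_f, lie_lie, sub_sub_cancel]
  induction k with
  | zero => simp [lie_f_e, hefc, hc]
  | succ k ih =>
    rw [pow_succ', Module.End.mul_apply, toEnd_apply_apply, lie_f_e, ih,
      t.lie_h_pow_toEnd_e hc, lie_smul, IsSl2Triple.lie_e_pow_toEnd_e, ← sub_smul]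
    congr 1
    push_cast
    ring

variable {K : Type*} [Field K] [LieAlgebra K L] [Module K M] [LieModule K L M]
  [CharZero K] [FiniteDimensional K M]

lemma exists_pow_toEnd_e_eq_zero (t : IsSl2Triple h e f) {μ : K} {c : M} (hc : ⁅h, c⁆ = μ • c) :
    ∃ k : ℕ, (toEnd K L M e ^ k) c = 0 := by
  by_contra! hne
  have hasEigenvalue (k : ℕ) : (toEnd K L M h).HasEigenvalue (μ + 2 * k) :=
    hasEigenvalue_of_hasEigenvector
      (hasEigenvector_iff.mpr ⟨mem_eigenspace_iff.mpr (t.lie_h_pow_toEnd_e hc k), hne k⟩)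
  have injective_weight : Function.Injective fun k : ℕ => μ + 2 * (k : K) := fun _ _ => by simp
  exact Set.infinite_of_injective_forall_mem injective_weight hasEigenvalue
    (finite_hasEigenvalue _)

lemma eq_zero_of_lie_e_lie_f_eq_zero (t : IsSl2Triple h e f) {μ : K} (hμ : ∀ k : ℕ, μ + k ≠ 0)
    {c : M} (hc : ⁅h, c⁆ = μ • c) (hefc : ⁅e, ⁅f, c⁆⁆ = 0) : c = 0 := by
  by_contra hne
  obtain ⟨k, hk, hk_succ⟩ := Nat.exists_not_and_succ_of_not_zero_of_exists
    (p := fun k => (toEnd K L M e ^ k) c = 0) (by simpa using hne) (exists_pow_toEnd_e_eq_zero t hc)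
  have := lie_f_pow_succ_toEnd_e t hc hefc k
  rw [hk_succ, lie_zero, eq_comm, smul_eq_zero_iff_left hk, neg_eq_zero, mul_eq_zero] at this
  exact this.elim (Nat.cast_add_one_ne_zero k) (hμ k)

lemma exists_lie_e_eq (t : IsSl2Triple h e f) {μ : K} (hμ : ∀ k : ℕ, μ + 2 + k ≠ 0) {c : M}
    (hc : c ∈ (toEnd K L M h).eigenspace (μ + 2)) :
    ∃ b ∈ (toEnd K L M h).eigenspace μ, ⁅e, b⁆ = c := by
  have lie_f_mem {b : M} (hb : b ∈ (toEnd K L M h).eigenspace (μ + 2)) :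
      ⁅f, b⁆ ∈ (toEnd K L M h).eigenspace μ := by
    simpa only [add_sub_cancel_right] using lie_f_mem_eigenspace t hb
  let ef : End K ((toEnd K L M h).eigenspace (μ + 2)) :=
    (toEnd K L M e ∘ₗ toEnd K L M f).restrict fun b hb => lie_e_mem_eigenspace t (lie_f_mem hb)
  have ef_injective : Function.Injective ef := by
    refine (injective_iff_map_eq_zero ef).mpr fun b hb => Subtype.ext ?_
    exact eq_zero_of_lie_e_lie_f_eq_zero t hμ (mem_eigenspace_iff.mp b.2) (congrArg Subtype.val hb)
  obtain ⟨b, hb⟩ := LinearMap.injective_iff_surjective.mp ef_injective ⟨c, hc⟩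
  exact ⟨⁅f, (b : M)⁆, lie_f_mem b.2, congrArg Subtype.val hb⟩

lemma mem_ker_inf_ker_iff (t : IsSl2Triple h e f) {c : M} :
    c ∈ (toEnd K L M e).ker ⊓ (toEnd K L M f).ker ↔
      c ∈ (toEnd K L M h).eigenspace 0 ∧ ⁅e, c⁆ = 0 := by
  simp only [Submodule.mem_inf, LinearMap.mem_ker, toEnd_apply_apply, mem_eigenspace_iff, zero_smul]
  refine ⟨fun ⟨he, hf⟩ => ⟨?_, he⟩, fun ⟨hh, he⟩ => ⟨he, ?_⟩⟩
  · rw [← t.lie_e_f, lie_lie, he, hf, lie_zero, lie_zero, sub_zero]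
  · by_contra hne
    have primitive : t.HasPrimitiveVectorWith c (0 : K) :=
      ⟨fun hc => hne (by rw [hc, lie_zero]), by rw [hh, zero_smul], he⟩
    exact hne (by simpa using primitive.pow_toEnd_f_eq_zero_of_eq_nat (n := 0) Nat.cast_zero.symm)

theorem finrank_ker_inf_ker_add_finrank_eigenspace_two (t : IsSl2Triple h e f) :
    finrank K ↥((toEnd K L M e).ker ⊓ (toEnd K L M f).ker) +
      finrank K ((toEnd K L M h).eigenspace 2) = finrank K ((toEnd K L M h).eigenspace 0) := by
  have mapsTo (c) (hc : c ∈ (toEnd K L M h).eigenspace 0) :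
      toEnd K L M e c ∈ (toEnd K L M h).eigenspace 2 := by
    simpa using lie_e_mem_eigenspace t hc
  have range_eq_top : ((toEnd K L M e).restrict mapsTo).range = ⊤ := by
    refine LinearMap.range_eq_top.mpr fun ⟨c, hc⟩ => ?_
    obtain ⟨b, hb, rfl⟩ := exists_lie_e_eq t (μ := (0 : K)) (fun k => by norm_cast; lia)
      (by rwa [zero_add])
    exact ⟨⟨b, hb⟩, rfl⟩
  have map_ker : ((toEnd K L M e).restrict mapsTo).ker.map (Submodule.subtype _) =
      (toEnd K L M e).ker ⊓ (toEnd K L M f).ker := by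
    ext c
    rw [mem_ker_inf_ker_iff t, LinearMap.ker_restrict, Submodule.map_comap_subtype]
    simp
  rw [← map_ker, Submodule.finrank_map_subtype_eq, add_comm, ← finrank_top, ← range_eq_top,
    LinearMap.finrank_range_add_finrank_ker]

attribute [local instance] LieRing.ofAssociativeRing

theorem finrank_rep_ker_inf_ker_add_finrank_eigenspace_two {M : Type*} [AddCommGroup M]
    [Module K M] [FiniteDimensional K M] (t : IsSl2Triple h e f) (ρ : L →ₗ⁅K⁆ End K M) :
    finrank K ↥((ρ e).ker ⊓ (ρ f).ker) + finrank K ((ρ h).eigenspace 2) =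
      finrank K ((ρ h).eigenspace 0) := by
  let _ : LieRingModule L M := LieRingModule.compLieHom M ρ
  have _ : LieModule K L M := LieModule.compLieHom M ρ
  exact finrank_ker_inf_ker_add_finrank_eigenspace_two (K := K) t

end SlTwo

section MultilinearAction

attribute [local instance] LieRing.ofAssociativeRing

variable {R ι M N : Type*} [CommRing R] [Fintype ι] [DecidableEq ι] [AddCommGroup M] [Module R M]
  [AddCommGroup N] [Module R N]

/-- The derivation action of an endomorphism `A` of `M` on multilinear maps,
`F ↦ ∑ i, F (…, A xᵢ, …)`: the differential of `g ↦ F ∘ (g × ⋯ × g)` at `g = 1`. -/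
noncomputable def derivationAction :
    Module.End R M →ₗ[R] Module.End R (MultilinearMap R (fun _ : ι => M) N) :=
  (MultilinearMap.compLinearMapMultilinear.linearDeriv fun _ => LinearMap.id) ∘ₗ
    LinearMap.pi fun _ => LinearMap.id

lemma derivationAction_apply (A : Module.End R M) (F : MultilinearMap R (fun _ : ι => M) N)
    (x : ι → M) : derivationAction A F x = ∑ i, F (update x i (A (x i))) := by
  have update_apply (i : ι) : (fun j => update (fun _ => LinearMap.id) i A j (x j)) =
      update x i (A (x i)) := by
    ext j
    obtain rfl | hj := eq_or_ne j i <;> simp [*]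
  simp [derivationAction, update_apply]

lemma derivationAction_mul_apply (A B : Module.End R M) (F : MultilinearMap R (fun _ : ι => M) N)
    (x : ι → M) :
    derivationAction A (derivationAction B F) x = derivationAction (B * A) F x +
      ∑ i, ∑ j ∈ {j | j ≠ i}, F (update (update x i (A (x i))) j (B (x j))) := by
  simp only [derivationAction_apply, ← Finset.sum_add_distrib]
  refine Finset.sum_congr rfl fun i _ => ?_
  rw [← Finset.sum_filter_add_sum_filter_not _ (· = i), Finset.filter_eq' _ i,
    if_pos (Finset.mem_univ i), Finset.sum_singleton, update_self, update_idem]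
  congr 1
  refine Finset.sum_congr rfl fun j hj => ?_
  rw [update_of_ne (Finset.mem_filter.mp hj).2]

lemma derivationAction_lie (A B : Module.End R M) :
    (derivationAction ⁅A, B⁆ : Module.End R (MultilinearMap R (fun _ : ι => M) N)) =
      ⁅(derivationAction B : Module.End R (MultilinearMap R (fun _ : ι => M) N)),
        derivationAction A⁆ := by
  ext F x
  have mixed_terms : ∑ i, ∑ j ∈ {j | j ≠ i}, F (update (update x i (A (x i))) j (B (x j))) =
      ∑ i, ∑ j ∈ {j | j ≠ i}, F (update (update x i (B (x i))) j (A (x j))) := by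
    rw [Finset.sum_comm' (t' := Finset.univ) (s' := fun j => {i | i ≠ j}) (by simp [ne_comm])]
    exact Finset.sum_congr rfl fun j _ => Finset.sum_congr rfl fun i hi => by
      rw [update_comm (Finset.mem_filter.mp hi).2.symm]
  simp only [Ring.lie_def, map_sub, LinearMap.sub_apply, sub_apply, Module.End.mul_apply,
    derivationAction_mul_apply, mixed_terms, add_sub_add_right_eq_sub]

/-- Multilinear maps as a representation of `𝔤𝔩(M)`. The sign makes the contravariant
`derivationAction` a Lie algebra homomorphism. -/
noncomputable def multilinearRep :
    Module.End R M →ₗ⁅R⁆ Module.End R (MultilinearMap R (fun _ : ι => M) N) where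
  toLinearMap := -derivationAction
  map_lie' {A B} := by
    change -derivationAction ⁅A, B⁆ = ⁅-derivationAction A, -derivationAction B⁆
    rw [derivationAction_lie, lie_skew, neg_lie, lie_neg, neg_neg]

@[simp]
lemma multilinearRep_apply (A : Module.End R M) :
    (multilinearRep A : Module.End R (MultilinearMap R (fun _ : ι => M) N)) = -derivationAction A :=
  rfl

end MultilinearAction

section Diagonal

variable {K V κ : Type*} [Field K] [AddCommGroup V] [Module K V] [Finite κ]

theorem finrank_eigenspace_eq_card (b : Basis κ K V) {T : Module.End K V} {w : κ → K}
    (hT : ∀ i, T (b i) = w i • b i) (μ : K) :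
    finrank K (T.eigenspace μ) = Nat.card {i // w i = μ} := by
  cases nonempty_fintype κ
  classical
  have repr_T (v : V) (i : κ) : b.repr (T v) i = w i * b.repr v i := by
    suffices b.coord i ∘ₗ T = w i • b.coord i from LinearMap.congr_fun this v
    refine b.ext fun j => ?_
    obtain rfl | hij := eq_or_ne j i <;> simp [*]
  have eigenspace_eq : T.eigenspace μ = Submodule.span K (b '' {i | w i = μ}) := by
    ext v
    simp only [Module.End.mem_eigenspace_iff, b.mem_span_image, b.ext_elem_iff, repr_T, map_smul,
      Finsupp.smul_apply, smul_eq_mul, mul_eq_mul_right_iff]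
    simp [Set.subset_def, or_iff_not_imp_right]
  rw [eigenspace_eq, Set.image_eq_range,
    finrank_span_eq_card (b := fun i : {i | w i = μ} => b i)
      (b.linearIndependent.comp _ Subtype.val_injective),
    ← Nat.card_eq_fintype_card]
  rfl

variable {ι : Type*} [Fintype ι] [DecidableEq ι]

lemma derivationAction_multilinearMap (b : Basis κ K V) {A : Module.End K V} {w : κ → K}
    (hA : ∀ k, A (b k) = w k • b k) (k : (ι → κ) × Unit) :
    derivationAction A (Basis.multilinearMap (fun _ => b) (Basis.singleton Unit K) k) =
      (∑ i, w (k.1 i)) • Basis.multilinearMap (fun _ => b) (Basis.singleton Unit K) k := by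
  refine Basis.ext_multilinear (fun _ => b) fun l => ?_
  rw [derivationAction_apply, smul_apply]
  simp only [hA, MultilinearMap.map_update_smul, Function.update_eq_self, ← Finset.sum_smul]
  by_cases hkl : l = k.1
  · rw [hkl]
  · obtain ⟨i, hi⟩ := ne_iff.mp hkl
    rw [Basis.multilinearMap_apply_apply, Finset.prod_eq_zero (Finset.mem_univ i) (by simp [hi])]
    simp

theorem finrank_eigenspace_derivationAction (b : Basis κ K V) {A : Module.End K V} {w : κ → K}
    (hA : ∀ k, A (b k) = w k • b k) (μ : K) :
    finrank K ((-derivationAction A : Module.End K (MultilinearMap K (fun _ : ι => V) K)).eigenspace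
      μ) = Nat.card {k : ι → κ // -∑ i, w (k i) = μ} := by
  rw [finrank_eigenspace_eq_card (w := fun k => -∑ i, w (k.1 i))
    (Basis.multilinearMap (fun _ => b) (Basis.singleton Unit K)) fun k => by
      rw [LinearMap.neg_apply, derivationAction_multilinearMap b hA, neg_smul]]
  exact Nat.card_congr ((Equiv.prodPUnit _).subtypeEquiv fun _ => Iff.rfl)

end Diagonal

section Flow

variable {𝕜 ι V W : Type*} [NormedAddCommGroup V] [NormedAddCommGroup W]

theorem continuous_multilinearMap [Finite ι] [NontriviallyNormedField 𝕜] [CompleteSpace 𝕜]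
    [NormedSpace 𝕜 V] [NormedSpace 𝕜 W] [FiniteDimensional 𝕜 V]
    (F : MultilinearMap 𝕜 (fun _ : ι => V) W) : Continuous F := by
  classical
  cases nonempty_fintype ι
  let b := finBasis 𝕜 V
  have apply_eq (x : ι → V) :
      F x = ∑ k : ι → Fin (finrank 𝕜 V), (∏ i, b.coord (k i) (x i)) • F fun i => b (k i) := by
    conv_lhs => rw [show x = fun i => ∑ j, b.coord j (x i) • b j from
      funext fun i => (b.sum_repr (x i)).symm]
    simp only [MultilinearMap.map_sum, MultilinearMap.map_smul_univ]
  have continuous_coord (j) : Continuous (b.coord j) := LinearMap.continuous_of_finiteDimensional _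
  rw [funext apply_eq]
  fun_prop

variable [RCLike 𝕜] [NormedSpace 𝕜 V] {A : Module.End 𝕜 V} {U : 𝕜 → Module.End 𝕜 V}

lemma hasDerivAt_of_hasDerivAt_basis {κ : Type*} [Finite κ] (b : Basis κ 𝕜 V) {t : 𝕜}
    (hU : ∀ k, HasDerivAt (fun s => U s (b k)) (A (U t (b k))) t) (ξ : V) :
    HasDerivAt (fun s => U s ξ) (A (U t ξ)) t := by
  cases nonempty_fintype κ
  rw [← b.sum_repr ξ]
  simp only [map_sum, map_smul]
  exact HasDerivAt.fun_sum fun k _ => (hU k).const_smul _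

variable [Fintype ι] [DecidableEq ι] [NormedSpace 𝕜 W] [FiniteDimensional 𝕜 V]

lemma hasDerivAt_multilinearMap_flow (F : MultilinearMap 𝕜 (fun _ : ι => V) W) {t : 𝕜}
    (hU : ∀ ξ, HasDerivAt (fun s => U s ξ) (A (U t ξ)) t) (x : ι → V) :
    HasDerivAt (fun s => F fun i => U s (x i)) (derivationAction A F fun i => U t (x i)) t := by
  let Fc : ContinuousMultilinearMap 𝕜 (fun _ : ι => V) W := ⟨F, continuous_multilinearMap F⟩
  have Fc_apply (y : ι → V) : Fc y = F y := rfl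
  have := (HasFDerivAt.multilinear_comp Fc fun i => (hU (x i)).hasFDerivAt).hasDerivAt
  simpa [derivationAction_apply, Fc_apply] using this

theorem derivationAction_eq_zero_iff (hU : ∀ t ξ, HasDerivAt (fun s => U s ξ) (A (U t ξ)) t)
    (hU_zero : U 0 = 1) (F : MultilinearMap 𝕜 (fun _ : ι => V) W) :
    derivationAction A F = 0 ↔ ∀ t, (F.compLinearMap fun _ => U t) = F := by
  have hasDerivAt (t : 𝕜) (x : ι → V) := hasDerivAt_multilinearMap_flow F (hU t) x
  refine ⟨fun hF t => MultilinearMap.ext fun x => ?_, fun hF => MultilinearMap.ext fun x => ?_⟩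
  · have := is_const_of_deriv_eq_zero (fun s => (hasDerivAt s x).differentiableAt)
      (fun s => by rw [(hasDerivAt s x).deriv, hF, zero_apply]) t 0
    simpa [hU_zero] using this
  · have const (s : 𝕜) : (F fun i => U s (x i)) = F x := DFunLike.congr_fun (hF s) x
    have := hasDerivAt 0 x
    simp only [const, hU_zero, Module.End.one_apply] at this
    exact this.unique (hasDerivAt_const 0 (F x))

end Flow

section Transvections

lemma forall_specialLinearGroup_two_iff {K : Type*} [Field K] {P : Matrix (Fin 2) (Fin 2) K → Prop}
    (hmul : ∀ g h, P g → P h → P (g * h)) :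
    (∀ g : Matrix.SpecialLinearGroup (Fin 2) K, P g) ↔
      (∀ c, P !![1, 0; c, 1]) ∧ ∀ c, P !![1, c; 0, 1] := by
  refine ⟨fun h => ⟨fun c => h ⟨_, by simp⟩, fun c => h ⟨_, by simp⟩⟩,
    fun ⟨h_lower, h_upper⟩ g => ?_⟩
  refine Matrix.SL2.transvection_induction (fun g => P g) (fun i j hij c => ?_)
    (fun g h hg hh => hmul g h hg hh) g
  rw [Matrix.SpecialLinearGroup.transvection_coe]
  fin_cases i <;> fin_cases j
  · exact absurd rfl hij
  · convert h_upper c using 1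
    ext i j
    fin_cases i <;> fin_cases j <;> simp
  · convert h_lower c using 1
    ext i j
    fin_cases i <;> fin_cases j <;> simp
  · exact absurd rfl hij

end Transvections

section Counting

/-- The height after the first `p` steps of the lattice path with increments `x`. It is constant
for `n ≤ p`. -/
def height {n : ℕ} (x : Fin n → ℤ) (p : ℕ) : ℤ :=
  ∑ i ∈ {i : Fin n | (i : ℕ) < p}, x i

variable {n : ℕ} (x : Fin n → ℤ)

@[simp]
lemma height_zero : height x 0 = 0 := by
  simp [height]

lemma height_of_le {p : ℕ} (hp : n ≤ p) : height x p = ∑ i, x i := by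
  rw [height, Finset.filter_true_of_mem fun i _ => i.isLt.trans_le hp]

lemma height_succ (i : Fin n) : height x (i + 1) = height x i + x i := by
  have filter_succ : Finset.univ.filter (fun j : Fin n => (j : ℕ) < i + 1) =
      insert i (Finset.univ.filter fun j : Fin n => (j : ℕ) < i) := by
    ext j
    simp only [Finset.mem_filter_univ, Finset.mem_insert, Fin.ext_iff]
    lia
  rw [height, filter_succ, Finset.sum_insert (by simp), add_comm, height]

lemma height_add_sum_Ico {p q : ℕ} (hpq : p ≤ q) :
    height x p + ∑ i ∈ {i : Fin n | p ≤ (i : ℕ) ∧ (i : ℕ) < q}, x i = height x q := by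
  simp only [height, Finset.sum_filter, ← Finset.sum_add_distrib]
  refine Finset.sum_congr rfl fun i _ => ?_
  split_ifs <;> lia

lemma height_snoc (a : ℤ) {p : ℕ} (hp : p ≤ n) :
    height (Fin.snoc x a : Fin (n + 1) → ℤ) p = height x p := by
  simp [height, Finset.sum_filter, Fin.sum_univ_castSucc, hp]

lemma card_subtype_fin_succ {α : Type*} [Fintype α] (P : (Fin (n + 1) → α) → Prop) :
    Nat.card {k // P k} = ∑ a, Nat.card {k : Fin n → α // P (Fin.snoc k a)} := by
  rw [← Nat.card_sigma]
  exact Nat.card_congr (((Fin.snocEquiv fun _ => α).symm.subtypeEquiv fun k => by simp).trans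
    (Equiv.subtypeProdEquivSigmaSubtype fun a k => P (Fin.snoc k a)))

variable {m d : ℕ}

/-- The increments of the path that performs, in its `i`-th stage, `k i` down steps followed by
`d - k i` up steps. -/
def stageSteps (k : Fin m → Fin (d + 1)) : Fin m → ℤ :=
  fun i => (d : ℤ) - 2 * k i

/-- The down steps at the beginning of each stage do not lead below zero. -/
def IsAdmissible (k : Fin m → Fin (d + 1)) : Prop :=
  ∀ i, (k i : ℤ) ≤ height (stageSteps k) i

lemma stageSteps_snoc (k : Fin m → Fin (d + 1)) (j : Fin (d + 1)) :
    stageSteps (Fin.snoc k j : Fin (m + 1) → Fin (d + 1)) =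
      Fin.snoc (stageSteps k) ((d : ℤ) - 2 * j) := by
  ext i
  refine Fin.lastCases ?_ (fun i => ?_) i <;> simp [stageSteps]

lemma sum_stageSteps_snoc (k : Fin m → Fin (d + 1)) (j : Fin (d + 1)) :
    ∑ i, stageSteps (Fin.snoc k j : Fin (m + 1) → Fin (d + 1)) i =
      ∑ i, stageSteps k i + (d - 2 * j) := by
  rw [stageSteps_snoc, Fin.sum_snoc]

lemma isAdmissible_snoc_iff (k : Fin m → Fin (d + 1)) (j : Fin (d + 1)) :
    IsAdmissible (Fin.snoc k j : Fin (m + 1) → Fin (d + 1)) ↔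
      IsAdmissible k ∧ (j : ℤ) ≤ ∑ i, stageSteps k i := by
  simp [IsAdmissible, Fin.forall_fin_succ', stageSteps_snoc, height_snoc, height_of_le]

/-- The number of choices of `k` whose path ends at height `h`: the dimension of the weight space
of weight `h` in the `m`-th tensor power of the binary forms of degree `d`. -/
noncomputable def weightMult (m d : ℕ) (h : ℤ) : ℕ :=
  Nat.card {k : Fin m → Fin (d + 1) // ∑ i, stageSteps k i = h}

/-- The number of admissible choices of `k` whose path ends at height `h`. -/
noncomputable def admissibleCount (m d : ℕ) (h : ℤ) : ℕ :=
  Nat.card {k : Fin m → Fin (d + 1) // IsAdmissible k ∧ ∑ i, stageSteps k i = h}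

lemma weightMult_neg (h : ℤ) : weightMult m d (-h) = weightMult m d h := by
  refine Nat.card_congr ((Equiv.arrowCongr (Equiv.refl _) Fin.revPerm).subtypeEquiv fun k => ?_)
  have stageSteps_rev (i : Fin m) : stageSteps (fun i => (k i).rev) i = -stageSteps k i := by
    have := (k i).isLt
    simp only [stageSteps, Fin.val_rev]
    lia
  change _ ↔ ∑ i, stageSteps (fun i => (k i).rev) i = h
  simp only [stageSteps_rev, Finset.sum_neg_distrib, neg_eq_iff_eq_neg]

lemma weightMult_succ (h : ℤ) :
    weightMult (m + 1) d h = ∑ j : Fin (d + 1), weightMult m d (h - d + 2 * j) := by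
  rw [weightMult, card_subtype_fin_succ]
  refine Finset.sum_congr rfl fun j _ => Nat.card_congr (Equiv.subtypeEquivRight fun k => ?_)
  rw [sum_stageSteps_snoc]
  lia

lemma admissibleCount_succ (h : ℤ) :
    admissibleCount (m + 1) d h =
      ∑ j ∈ {j : Fin (d + 1) | (d : ℤ) - j ≤ h}, admissibleCount m d (h - d + 2 * j) := by
  rw [admissibleCount, card_subtype_fin_succ, Finset.sum_filter]
  refine Finset.sum_congr rfl fun j _ => ?_
  simp only [isAdmissible_snoc_iff, sum_stageSteps_snoc]
  split_ifs with hj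
  · exact Nat.card_congr (Equiv.subtypeEquivRight fun k => by lia)
  · have : IsEmpty {k : Fin m → Fin (d + 1) // (IsAdmissible k ∧ (j : ℤ) ≤ ∑ i, stageSteps k i) ∧
        ∑ i, stageSteps k i + ((d : ℤ) - 2 * j) = h} := ⟨fun ⟨k, _⟩ => by lia⟩
    exact Nat.card_of_isEmpty

/-- The discrete derivative of the weight multiplicities is antisymmetric about `-1`. -/
lemma sum_weightMult_sub_eq_zero (m d : ℕ) {h : ℤ} (hh : 0 ≤ h) :
    ∑ j ∈ {j : Fin (d + 1) | ¬(d : ℤ) - j ≤ h},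
      ((weightMult m d (h - d + 2 * j) : ℤ) - weightMult m d (h - d + 2 * j + 2)) = 0 := by
  let reflect (j : Fin (d + 1)) : Fin (d + 1) := ⟨(d - h - 1 - j).toNat, by lia⟩
  have val_reflect {j : Fin (d + 1)} (hj : ¬(d : ℤ) - j ≤ h) :
      ((reflect j : ℕ) : ℤ) = d - h - 1 - j :=
    Int.toNat_of_nonneg (by lia)
  have mem_filter {j : Fin (d + 1)} :
      j ∈ ({j | ¬(d : ℤ) - j ≤ h} : Finset (Fin (d + 1))) ↔ ¬(d : ℤ) - j ≤ h := by
    simp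
  refine Finset.sum_involution (fun j _ => reflect j) (fun j hj => ?_) (fun j hj hne heq => ?_)
    (fun j hj => mem_filter.mpr ?_) (fun j hj => ?_)
  all_goals rw [mem_filter] at hj
  · rw [val_reflect hj, ← weightMult_neg (m := m) (d := d) (h - d + 2 * _),
      ← weightMult_neg (m := m) (d := d) (h - d + 2 * _ + 2)]
    ring_nf
  · have := val_reflect hj
    rw [heq] at this
    rw [show h - d + 2 * j = -1 by lia, weightMult_neg] at hne
    exact hne (sub_self _)
  · rw [val_reflect hj]
    lia
  · have val_eq := val_reflect hj
    have val_reflect_eq := val_reflect (j := reflect j) (by lia)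
    exact Fin.ext (by lia)

theorem admissibleCount_add_weightMult {h : ℤ} (hh : 0 ≤ h) :
    admissibleCount m d h + weightMult m d (h + 2) = weightMult m d h := by
  induction m generalizing h with
  | zero =>
    have : IsEmpty {k : Fin 0 → Fin (d + 1) // ∑ i, stageSteps k i = h + 2} :=
      ⟨fun ⟨k, hk⟩ => by
        rw [Fin.sum_univ_zero] at hk
        lia⟩
    rw [weightMult, weightMult, Nat.card_of_isEmpty]
    simp [admissibleCount, IsAdmissible]
  | succ m ih =>
    have admissibleCount_eq (j : Fin (d + 1)) (hj : (d : ℤ) - j ≤ h) :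
        (admissibleCount m d (h - d + 2 * j) : ℤ) =
          weightMult m d (h - d + 2 * j) - weightMult m d (h - d + 2 * j + 2) := by
      rw [← ih (by lia)]
      push_cast
      ring
    zify
    rw [← eq_sub_iff_add_eq, admissibleCount_succ, weightMult_succ, weightMult_succ]
    push_cast
    rw [Finset.sum_congr rfl fun j hj => admissibleCount_eq j (Finset.mem_filter.mp hj).2,
      ← add_zero (Finset.sum _ _), ← sum_weightMult_sub_eq_zero m d hh,
      Finset.sum_filter_add_sum_filter_not, Finset.sum_sub_distrib]
    congr! 4
    ring

end Counting

section BinaryForms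

variable {d : ℕ}

/-- The coefficients of the `d`-th power of the linear form `v ↦ x ⬝ᵥ v`, normalized as in
`Pval`. -/
def powForm (d : ℕ) (x : Fin 2 → ℂ) : Fin (d + 1) → ℂ :=
  fun k => x 0 ^ (k : ℕ) * x 1 ^ (d - (k : ℕ))

lemma Pval_powForm (x v : Fin 2 → ℂ) : Pval d (powForm d x) v = (x ⬝ᵥ v) ^ d := by
  rw [Matrix.vec2_dotProduct, add_pow, ← Fin.sum_univ_eq_sum_range
    (fun k => (x 0 * v 0) ^ k * (x 1 * v 1) ^ (d - k) * (d.choose k : ℂ)) (d + 1)]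
  refine Finset.sum_congr rfl fun k _ => ?_
  rw [powForm, mul_pow, mul_pow]
  ring

lemma injective_natCast_fin (R : Type*) [AddMonoidWithOne R] [CharZero R] (n : ℕ) :
    Function.Injective fun j : Fin n => ((j : ℕ) : R) :=
  Nat.cast_injective.comp Fin.val_injective

lemma linearIndependent_powForm (d : ℕ) :
    LinearIndependent ℂ fun j : Fin (d + 1) => powForm d ![(j : ℕ), 1] := by
  have det_ne_zero := Matrix.det_vandermonde_ne_zero_iff.mpr (injective_natCast_fin ℂ (d + 1))
  have vandermonde_row (j : Fin (d + 1)) :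
      Matrix.vandermonde (fun j : Fin (d + 1) => ((j : ℕ) : ℂ)) j = powForm d ![(j : ℕ), 1] :=
    funext fun k => by simp [powForm, Matrix.vandermonde_apply]
  simpa only [← vandermonde_row] using Matrix.linearIndependent_rows_of_det_ne_zero det_ne_zero

/-- The basis of the binary forms of degree `d` consisting of the `d`-th powers of the linear
forms `j v₀ + v₁` with `0 ≤ j ≤ d`. -/
noncomputable def powFormBasis (d : ℕ) : Basis (Fin (d + 1)) ℂ (Fin (d + 1) → ℂ) :=
  basisOfLinearIndependentOfCardEqFinrank (linearIndependent_powForm d) (by simp)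

@[simp]
lemma powFormBasis_apply (j : Fin (d + 1)) : powFormBasis d j = powForm d ![(j : ℕ), 1] := by
  simp [powFormBasis]

/-- Evaluation of binary forms at `v`, as a linear functional of the coefficients. -/
noncomputable def evalForm (d : ℕ) (v : Fin 2 → ℂ) : (Fin (d + 1) → ℂ) →ₗ[ℂ] ℂ :=
  Fintype.linearCombination ℂ
    fun k : Fin (d + 1) => (d.choose (k : ℕ) : ℂ) * v 0 ^ (k : ℕ) * v 1 ^ (d - (k : ℕ))

lemma evalForm_apply (v : Fin 2 → ℂ) (ξ : Fin (d + 1) → ℂ) : evalForm d v ξ = Pval d ξ v := by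
  rw [evalForm, Fintype.linearCombination_apply, Pval]
  exact Finset.sum_congr rfl fun k _ => by rw [smul_eq_mul]; ring

lemma Pval_injective : Function.Injective (Pval d) := by
  intro ξ η h
  have coeff_eq_zero : (fun k : Fin (d + 1) => (d.choose k : ℂ) * (ξ k - η k)) = 0 := by
    refine Matrix.eq_zero_of_forall_index_sum_mul_pow_eq_zero (injective_natCast_fin ℂ _)
      fun j => ?_
    have := sub_eq_zero.mpr (congrFun h ![(j : ℕ), 1])
    simpa [Pval, ← Finset.sum_sub_distrib, ← sub_mul, ← mul_sub] using this
  ext k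
  have choose_ne_zero : (d.choose k : ℂ) ≠ 0 :=
    Nat.cast_ne_zero.mpr (Nat.choose_pos (Nat.le_of_lt_succ k.isLt)).ne'
  exact sub_eq_zero.mp ((mul_eq_zero.mp (congrFun coeff_eq_zero k)).resolve_left choose_ne_zero)

/-- The substitution `p ↦ p ∘ g` on coefficients of binary forms of degree `d`, see
`Pval_substForm`. -/
noncomputable def substForm (d : ℕ) (g : Matrix (Fin 2) (Fin 2) ℂ) : End ℂ (Fin (d + 1) → ℂ) :=
  (powFormBasis d).constr ℂ fun j => powForm d (Matrix.vecMul ![(j : ℕ), 1] g)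

lemma Pval_substForm (g : Matrix (Fin 2) (Fin 2) ℂ) (ξ : Fin (d + 1) → ℂ) (v : Fin 2 → ℂ) :
    Pval d (substForm d g ξ) v = Pval d ξ (g.mulVec v) := by
  suffices evalForm d v ∘ₗ substForm d g = evalForm d (g.mulVec v) by
    simpa only [LinearMap.comp_apply, evalForm_apply] using LinearMap.congr_fun this ξ
  refine (powFormBasis d).ext fun j => ?_
  rw [LinearMap.comp_apply, substForm, Basis.constr_basis, powFormBasis_apply, evalForm_apply,
    evalForm_apply, Pval_powForm, Pval_powForm, Matrix.dotProduct_mulVec]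

lemma substForm_eq_iff {g : Matrix (Fin 2) (Fin 2) ℂ} {ξ η : Fin (d + 1) → ℂ} :
    substForm d g ξ = η ↔ ∀ v, Pval d η v = Pval d ξ (g.mulVec v) := by
  simp only [← Pval_injective.eq_iff, funext_iff, Pval_substForm, eq_comm]

lemma substForm_powForm (g : Matrix (Fin 2) (Fin 2) ℂ) (x : Fin 2 → ℂ) :
    substForm d g (powForm d x) = powForm d (Matrix.vecMul x g) :=
  substForm_eq_iff.mpr fun v => by rw [Pval_powForm, Pval_powForm, Matrix.dotProduct_mulVec]

lemma substForm_one : substForm d 1 = 1 :=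
  LinearMap.ext fun ξ => substForm_eq_iff.mpr fun v => by rw [Matrix.one_mulVec]; rfl

lemma substForm_mul (g h : Matrix (Fin 2) (Fin 2) ℂ) :
    substForm d (g * h) = substForm d h * substForm d g :=
  LinearMap.ext fun ξ => substForm_eq_iff.mpr fun v => by
    rw [Module.End.mul_apply, Pval_substForm, Pval_substForm, Matrix.mulVec_mulVec]

end BinaryForms

section Sl2Action

attribute [local instance] LieRing.ofAssociativeRing

section Operators

variable (R : Type*) [CommRing R] (d : ℕ)

/-- The raising operator of `𝔰𝔩₂` on normalized coefficients of binary forms of degree `d`. The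
index `k - 1` wraps around only at `k = 0`, where the factor `k` vanishes. -/
def raisingOp : End R (Fin (d + 1) → R) :=
  LinearMap.pi fun k => (k : R) • LinearMap.proj (k - 1)

/-- The lowering operator of `𝔰𝔩₂` on normalized coefficients of binary forms of degree `d`. The
index `k + 1` wraps around only at `k = d`, where the factor `d - k` vanishes. -/
def loweringOp : End R (Fin (d + 1) → R) :=
  LinearMap.pi fun k => (d - k : R) • LinearMap.proj (k + 1)

/-- The semisimple element of the `𝔰𝔩₂`-triple formed with `raisingOp` and `loweringOp`. -/
def weightOp : End R (Fin (d + 1) → R) :=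
  LinearMap.pi fun k => (2 * k - d : R) • LinearMap.proj k

variable {R d}

@[simp]
lemma raisingOp_apply (ξ : Fin (d + 1) → R) (k : Fin (d + 1)) :
    raisingOp R d ξ k = k * ξ (k - 1) := rfl

@[simp]
lemma loweringOp_apply (ξ : Fin (d + 1) → R) (k : Fin (d + 1)) :
    loweringOp R d ξ k = (d - k) * ξ (k + 1) := rfl

@[simp]
lemma weightOp_apply (ξ : Fin (d + 1) → R) (k : Fin (d + 1)) :
    weightOp R d ξ k = (2 * k - d) * ξ k := rfl

lemma val_mul_val_sub_one (k : Fin (d + 1)) : (k * (k - 1 : Fin (d + 1)) : R) = k * (k - 1) := by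
  obtain rfl | hk := eq_or_ne k 0
  · simp
  · rw [Fin.val_sub_one_of_ne_zero hk, Nat.cast_pred (Fin.pos_iff_ne_zero.mpr hk)]

lemma sub_val_mul_val_add_one (k : Fin (d + 1)) :
    ((d - k) * (k + 1 : Fin (d + 1)) : R) = (d - k) * (k + 1) := by
  obtain rfl | hk := eq_or_ne k (Fin.last d)
  · simp
  · rw [Fin.val_add_one_of_lt (Fin.lt_last_iff_ne_last.mpr hk), Nat.cast_succ]

theorem isSl2Triple_weightOp_raisingOp_loweringOp [CharZero R] (hd : d ≠ 0) :
    IsSl2Triple (weightOp R d) (raisingOp R d) (loweringOp R d) where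
  h_ne_zero h := by
    have := congrFun (LinearMap.congr_fun h fun _ => (1 : R)) 0
    simp [hd] at this
  lie_e_f := by
    refine LinearMap.ext fun ξ => funext fun k => ?_
    simp only [Ring.lie_def, LinearMap.sub_apply, Module.End.mul_apply, Pi.sub_apply,
      raisingOp_apply, loweringOp_apply, weightOp_apply, sub_add_cancel, add_sub_cancel_right]
    linear_combination (-ξ k) * val_mul_val_sub_one (R := R) k -
      ξ k * sub_val_mul_val_add_one (R := R) k
  lie_h_e_nsmul := by
    refine LinearMap.ext fun ξ => funext fun k => ?_
    simp only [Ring.lie_def, LinearMap.sub_apply, Module.End.mul_apply, Pi.sub_apply,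
      raisingOp_apply, weightOp_apply, two_nsmul, LinearMap.add_apply, Pi.add_apply]
    linear_combination -2 * ξ (k - 1) * val_mul_val_sub_one (R := R) k
  lie_h_f_nsmul := by
    refine LinearMap.ext fun ξ => funext fun k => ?_
    simp only [Ring.lie_def, LinearMap.sub_apply, Module.End.mul_apply, Pi.sub_apply,
      loweringOp_apply, weightOp_apply, LinearMap.neg_apply, Pi.neg_apply, two_nsmul,
      LinearMap.add_apply, Pi.add_apply]
    linear_combination -2 * ξ (k + 1) * sub_val_mul_val_add_one (R := R) k

end Operators

variable {d : ℕ}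

lemma hasDerivAt_powForm_add_mul_right (x : Fin 2 → ℂ) (t : ℂ) :
    HasDerivAt (fun s => powForm d ![x 0, x 1 + s * x 0])
      (loweringOp ℂ d (powForm d ![x 0, x 1 + t * x 0])) t := by
  refine hasDerivAt_pi.mpr fun k => ?_
  have hasDerivAt_coord : HasDerivAt (fun s : ℂ => x 1 + s * x 0) (x 0) t := by
    simpa using ((hasDerivAt_id t).mul_const (x 0)).const_add (x 1)
  refine ((hasDerivAt_coord.fun_pow (d - (k : ℕ))).const_mul (x 0 ^ (k : ℕ))).congr_deriv ?_
  rw [loweringOp_apply, ← Nat.cast_sub (Nat.le_of_lt_succ k.isLt)]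
  obtain rfl | hk := eq_or_ne k (Fin.last d)
  · simp
  · simp only [powForm, Matrix.cons_val_zero, Matrix.cons_val_one, Matrix.cons_val_fin_one,
      Fin.val_add_one_of_lt (Fin.lt_last_iff_ne_last.mpr hk), Nat.sub_add_eq]
    ring

lemma hasDerivAt_powForm_add_mul_left (x : Fin 2 → ℂ) (t : ℂ) :
    HasDerivAt (fun s => powForm d ![x 0 + s * x 1, x 1])
      (raisingOp ℂ d (powForm d ![x 0 + t * x 1, x 1])) t := by
  refine hasDerivAt_pi.mpr fun k => ?_
  have hasDerivAt_coord : HasDerivAt (fun s : ℂ => x 0 + s * x 1) (x 1) t := by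
    simpa using ((hasDerivAt_id t).mul_const (x 1)).const_add (x 0)
  refine ((hasDerivAt_coord.fun_pow (k : ℕ)).mul_const (x 1 ^ (d - (k : ℕ)))).congr_deriv ?_
  obtain rfl | hk := eq_or_ne k 0
  · simp
  · have := Fin.pos_iff_ne_zero.mpr hk
    have sub_pred : d - ((k : ℕ) - 1) = d - k + 1 := by lia
    simp only [raisingOp_apply, powForm, Matrix.cons_val_zero, Matrix.cons_val_one,
      Matrix.cons_val_fin_one, Fin.val_sub_one_of_ne_zero hk, sub_pred, pow_succ]
    ring

lemma vecMul_upper (x : Fin 2 → ℂ) (c : ℂ) :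
    Matrix.vecMul x !![1, c; 0, 1] = ![x 0, x 1 + c * x 0] := by
  ext i
  fin_cases i <;> simp [Matrix.vecMul_eq_sum, add_comm, mul_comm]

lemma vecMul_lower (x : Fin 2 → ℂ) (c : ℂ) :
    Matrix.vecMul x !![1, 0; c, 1] = ![x 0 + c * x 1, x 1] := by
  ext i
  fin_cases i <;> simp [Matrix.vecMul_eq_sum, mul_comm]

lemma hasDerivAt_substForm_upper (t : ℂ) (ξ : Fin (d + 1) → ℂ) :
    HasDerivAt (fun s => substForm d !![1, s; 0, 1] ξ)
      (loweringOp ℂ d (substForm d !![1, t; 0, 1] ξ)) t :=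
  hasDerivAt_of_hasDerivAt_basis (powFormBasis d) (U := fun s => substForm d !![1, s; 0, 1])
    (fun j => by
      simpa only [powFormBasis_apply, substForm_powForm, vecMul_upper]
        using hasDerivAt_powForm_add_mul_right ![(j : ℂ), 1] t) ξ

lemma hasDerivAt_substForm_lower (t : ℂ) (ξ : Fin (d + 1) → ℂ) :
    HasDerivAt (fun s => substForm d !![1, 0; s, 1] ξ)
      (raisingOp ℂ d (substForm d !![1, 0; t, 1] ξ)) t :=
  hasDerivAt_of_hasDerivAt_basis (powFormBasis d) (U := fun s => substForm d !![1, 0; s, 1])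
    (fun j => by
      simpa only [powFormBasis_apply, substForm_powForm, vecMul_lower]
        using hasDerivAt_powForm_add_mul_left ![(j : ℂ), 1] t) ξ

variable {m : ℕ}

lemma mem_invariantForms_iff {F : MultilinearMap ℂ (fun _ : Fin m => (Fin (d + 1) → ℂ)) ℂ} :
    F ∈ invariantForms d m ↔ ∀ g : Matrix.SpecialLinearGroup (Fin 2) ℂ,
      (F.compLinearMap fun _ => substForm d g) = F := by
  refine ⟨fun hF g => MultilinearMap.ext fun ξ => ?_, fun hF g ξ η hη => ?_⟩
  · exact hF g⁻¹ ξ _ fun i v => by rw [inv_inv, Pval_substForm]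
  · obtain rfl : (fun i => substForm d ↑g⁻¹ (ξ i)) = η :=
      funext fun i => substForm_eq_iff.mpr (hη i)
    exact DFunLike.congr_fun (hF g⁻¹) ξ

theorem invariantForms_eq_ker_inf_ker :
    invariantForms d m =
      (multilinearRep (raisingOp ℂ d)).ker ⊓ (multilinearRep (loweringOp ℂ d)).ker := by
  ext F
  have invariant_mul (g h : Matrix (Fin 2) (Fin 2) ℂ)
      (hg : (F.compLinearMap fun _ => substForm d g) = F)
      (hh : (F.compLinearMap fun _ => substForm d h) = F) :
      (F.compLinearMap fun _ => substForm d (g * h)) = F := by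
    conv_rhs => rw [← hg, ← hh]
    ext ξ
    simp [substForm_mul]
  have substForm_fin_two_one : substForm d !![1, 0; 0, 1] = 1 := by
    rw [← Matrix.one_fin_two, substForm_one]
  simp only [mem_invariantForms_iff, forall_specialLinearGroup_two_iff invariant_mul,
    Submodule.mem_inf, LinearMap.mem_ker, multilinearRep_apply, LinearMap.neg_apply, neg_eq_zero,
    derivationAction_eq_zero_iff hasDerivAt_substForm_lower substForm_fin_two_one,
    derivationAction_eq_zero_iff hasDerivAt_substForm_upper substForm_fin_two_one]

lemma finrank_eigenspace_weightOp (m d : ℕ) (h : ℤ) :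
    finrank ℂ ((multilinearRep (weightOp ℂ d) : End ℂ
        (MultilinearMap ℂ (fun _ : Fin m => Fin (d + 1) → ℂ) ℂ)).eigenspace h) =
      weightMult m d h := by
  have weightOp_basis (k : Fin (d + 1)) :
      weightOp ℂ d (Pi.basisFun ℂ _ k) = (2 * k - d : ℂ) • Pi.basisFun ℂ _ k := by
    ext j
    obtain rfl | hjk := eq_or_ne j k <;> simp [*]
  rw [multilinearRep_apply, finrank_eigenspace_derivationAction _ weightOp_basis]
  refine Nat.card_congr (Equiv.subtypeEquivRight fun k => ?_)
  rw [← Finset.sum_neg_distrib, ← Int.cast_inj (α := ℂ)]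
  simp only [stageSteps]
  push_cast
  simp only [neg_sub]

theorem finrank_invariantForms_add_weightMult (m : ℕ) (hd : d ≠ 0) :
    finrank ℂ (invariantForms d m) + weightMult m d 2 = weightMult m d 0 := by
  rw [invariantForms_eq_ker_inf_ker, ← finrank_eigenspace_weightOp, ← finrank_eigenspace_weightOp,
    Int.cast_two, Int.cast_zero]
  exact finrank_rep_ker_inf_ker_add_finrank_eigenspace_two
    (isSl2Triple_weightOp_raisingOp_loweringOp (R := ℂ) hd) (multilinearRep (ι := Fin m) (N := ℂ))

theorem finrank_invariantForms_eq_admissibleCount (m : ℕ) (hd : d ≠ 0) :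
    finrank ℂ (invariantForms d m) = admissibleCount m d 0 :=
  Nat.add_right_cancel <| (finrank_invariantForms_add_weightMult m hd).trans
    (admissibleCount_add_weightMult le_rfl).symm

end Sl2Action

section Words

variable {n : ℕ} {s : Fin n → Bool} {i j : Fin n}

/-- The increments of the lattice path of a word: `true` is an up step and marks the smaller
element of a pair, `false` is a down step and marks the larger one. -/
def wordSteps (s : Fin n → Bool) : Fin n → ℤ :=
  fun i => if s i then 1 else -1

/-- A word is a Dyck word if its path stays nonnegative and returns to zero. -/
def IsDyck (s : Fin n → Bool) : Prop :=
  (∀ p, 0 ≤ height (wordSteps s) p) ∧ ∑ i, wordSteps s i = 0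

lemma height_wordSteps_succ_of_true (hi : s i = true) :
    height (wordSteps s) (i + 1) = height (wordSteps s) i + 1 := by
  rw [height_succ, wordSteps, if_pos hi]

lemma height_wordSteps_succ_of_false (hi : s i = false) :
    height (wordSteps s) (i + 1) = height (wordSteps s) i - 1 := by
  simp [height_succ, wordSteps, hi, sub_eq_add_neg]

/-- The level of a step: the smaller one of the heights at its two ends. -/
def level (s : Fin n → Bool) (i : Fin n) : ℤ :=
  min (height (wordSteps s) i) (height (wordSteps s) (i + 1))

lemma level_of_true (hi : s i = true) : level s i = height (wordSteps s) i := by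
  rw [level, height_wordSteps_succ_of_true hi, min_eq_left (by lia)]

lemma level_of_false (hi : s i = false) : level s i = height (wordSteps s) (i + 1) := by
  rw [level, height_wordSteps_succ_of_false hi, min_eq_right (by lia)]

/-- Two positions are equal or the two ends of an arc under the path: their steps have the same
level, and the path stays strictly above this level between them. -/
def ArcRel (s : Fin n → Bool) (i j : Fin n) : Prop :=
  level s i = level s j ∧ ∀ p ∈ Set.uIoc (i : ℕ) j, level s i < height (wordSteps s) p

lemma ArcRel.refl (s : Fin n → Bool) (i : Fin n) : ArcRel s i i :=
  ⟨rfl, by simp⟩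

lemma ArcRel.symm (h : ArcRel s i j) : ArcRel s j i :=
  ⟨h.1.symm, fun p hp => h.1 ▸ h.2 p (Set.uIoc_comm (i : ℕ) j ▸ hp)⟩

lemma ArcRel.trans {l : Fin n} (hij : ArcRel s i j) (hjl : ArcRel s j l) : ArcRel s i l := by
  refine ⟨hij.1.trans hjl.1, fun p hp => ?_⟩
  by_cases hpij : p ∈ Set.uIoc (i : ℕ) j
  · exact hij.2 p hpij
  · rw [hij.1]
    refine hjl.2 p ?_
    simp only [Set.mem_uIoc] at hp hpij ⊢
    lia

lemma ArcRel.eq_true_left (h : ArcRel s i j) (hij : i < j) : s i = true := by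
  by_contra hi
  have := h.2 (i + 1) (Set.mem_uIoc.mpr (by lia))
  rw [level_of_false (Bool.eq_false_of_not_eq_true hi)] at this
  exact this.false

lemma ArcRel.eq_false_right (h : ArcRel s i j) (hij : i < j) : s j = false := by
  by_contra hj
  have := h.2 j (Set.mem_uIoc.mpr (by lia))
  rw [h.1, level_of_true (Bool.eq_true_of_not_eq_false hj)] at this
  exact this.false

lemma ArcRel.ne_of_ne (h : ArcRel s i j) (hij : i ≠ j) : s i ≠ s j := by
  rcases hij.lt_or_gt with hij | hji
  · simp [h.eq_true_left hij, h.eq_false_right hij]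
  · simp [h.symm.eq_true_left hji, h.symm.eq_false_right hji]

lemma ArcRel.not_crossing {i' j' : Fin n} (hii' : i < i') (hi'j : i' < j) (hjj' : j < j')
    (h : ArcRel s i j) : ¬ArcRel s i' j' := by
  intro h'
  have level_lt := h.2 i' (Set.mem_uIoc.mpr (by lia))
  have level_gt := h'.2 (j + 1) (Set.mem_uIoc.mpr (by lia))
  rw [h.1, level_of_false (h.eq_false_right (hii'.trans hi'j))] at level_lt
  rw [level_of_true (h'.eq_true_left (hi'j.trans hjj'))] at level_gt
  exact level_lt.not_gt level_gt

/-- The closing step is the one with which the path first returns to the height of `i`. -/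
lemma IsDyck.exists_arcRel_of_true (hs : IsDyck s) (hi : s i = true) :
    ∃ j, i < j ∧ ArcRel s i j := by
  classical
  have exists_return : ∃ p : ℕ, i < p ∧ height (wordSteps s) p ≤ height (wordSteps s) i :=
    ⟨n, i.isLt, by rw [height_of_le _ le_rfl, hs.2]; exact hs.1 i⟩
  obtain ⟨q, ⟨hiq, height_q⟩, min_q⟩ := Nat.findX exists_return
  have height_lt {p : ℕ} (hip : i < p) (hpq : p < q) :
      height (wordSteps s) i < height (wordSteps s) p := by
    by_contra! hp
    exact min_q p hpq ⟨hip, hp⟩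
  have hqn : q ≤ n := by
    by_contra! hnq
    have := height_lt i.isLt hnq
    rw [height_of_le _ le_rfl, hs.2] at this
    exact this.not_ge (hs.1 i)
  obtain ⟨j, rfl⟩ : ∃ j : Fin n, q = j + 1 := ⟨⟨q - 1, by lia⟩, (Nat.sub_add_cancel (by lia)).symm⟩
  have hij : i < j := by
    refine lt_of_le_of_ne (by lia) ?_
    rintro rfl
    rw [height_wordSteps_succ_of_true hi] at height_q
    lia
  have height_j := height_lt hij (by lia)
  have hj : s j = false := by
    by_contra hj
    rw [height_wordSteps_succ_of_true (Bool.eq_true_of_not_eq_false hj)] at height_q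
    lia
  refine ⟨j, hij, ?_, fun p hp => ?_⟩
  · rw [level_of_true hi, level_of_false hj]
    rw [height_wordSteps_succ_of_false hj] at height_q ⊢
    lia
  · rw [level_of_true hi]
    rw [Set.mem_uIoc] at hp
    exact height_lt (by lia) (by lia)

/-- The opening step is the last one before `j` that starts at most at the height at which `j`
ends. -/
lemma IsDyck.exists_arcRel_of_false (hs : IsDyck s) (hj : s j = false) :
    ∃ i, i < j ∧ ArcRel s i j := by
  classical
  have height_zero_le : height (wordSteps s) 0 ≤ height (wordSteps s) (j + 1) := by
    rw [height_zero]
    exact hs.1 _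
  obtain ⟨p, hp⟩ : ∃ p, Nat.findGreatest
      (fun p => height (wordSteps s) p ≤ height (wordSteps s) (j + 1)) j = p := ⟨_, rfl⟩
  obtain ⟨hpj, height_p, max_p⟩ := Nat.findGreatest_eq_iff.mp hp
  replace height_p : height (wordSteps s) p ≤ height (wordSteps s) (j + 1) := by
    by_cases h : p = 0
    · rwa [h]
    · exact height_p h
  have height_succ_j := height_wordSteps_succ_of_false hj
  obtain ⟨i, rfl⟩ : ∃ i : Fin n, p = i := ⟨⟨p, by lia⟩, rfl⟩
  have hij : i < j := by
    refine lt_of_le_of_ne hpj ?_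
    rintro rfl
    lia
  have height_succ_i := not_le.mp (max_p (Nat.lt_succ_self i) hij)
  have hi : s i = true := by
    by_contra hi
    rw [Nat.succ_eq_add_one,
      height_wordSteps_succ_of_false (Bool.eq_false_of_not_eq_true hi)] at height_succ_i
    lia
  rw [Nat.succ_eq_add_one, height_wordSteps_succ_of_true hi] at height_succ_i
  refine ⟨i, hij, ?_, fun q hq => ?_⟩
  · rw [level_of_true hi, level_of_false hj]
    lia
  · rw [level_of_true hi]
    rw [Set.mem_uIoc] at hq
    exact height_p.trans_lt (not_le.mp (max_p (by lia) (by lia)))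

lemma IsDyck.exists_ne_arcRel (hs : IsDyck s) (i : Fin n) : ∃ j, j ≠ i ∧ ArcRel s i j := by
  cases hi : s i with
  | true =>
    obtain ⟨j, hij, h⟩ := hs.exists_arcRel_of_true hi
    exact ⟨j, hij.ne', h⟩
  | false =>
    obtain ⟨j, hji, h⟩ := hs.exists_arcRel_of_false hi
    exact ⟨j, hji.ne, h.symm⟩

end Words

section Partitions

variable {n : ℕ} {π π' : Finpartition (Finset.univ : Finset (Fin n))} {i j : Fin n}

lemma sameBlock_iff_mem_part : SameBlock π i j ↔ j ∈ π.part i := by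
  refine ⟨?_, fun h => ⟨π.part i, π.part_mem.mpr (Finset.mem_univ i),
    π.mem_part (Finset.mem_univ i), h⟩⟩
  rintro ⟨B, hB, hi, hj⟩
  rwa [π.part_eq_of_mem hB hi]

lemma SameBlock.symm (h : SameBlock π i j) : SameBlock π j i :=
  let ⟨B, hB, hi, hj⟩ := h
  ⟨B, hB, hj, hi⟩

lemma eq_of_part_eq (h : ∀ i, π.part i = π'.part i) : π = π' := by
  have le_of_part_eq {π π' : Finpartition (Finset.univ : Finset (Fin n))}
      (h : ∀ i, π.part i = π'.part i) : π.parts ⊆ π'.parts := by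
    intro B hB
    obtain ⟨i, hi⟩ := π.nonempty_of_mem_parts hB
    rw [← π.part_eq_of_mem hB hi, h]
    exact π'.part_mem.mpr (Finset.mem_univ i)
  exact Finpartition.ext ((le_of_part_eq h).antisymm (le_of_part_eq fun i => (h i).symm))

namespace IsPairPartition

lemma eq_of_sameBlock_imp (hπ : IsPairPartition π) (hπ' : IsPairPartition π')
    (h : ∀ i j, SameBlock π i j → SameBlock π' i j) : π = π' :=
  eq_of_part_eq fun i => Finset.eq_of_subset_of_card_le
    (fun j hj => sameBlock_iff_mem_part.mp (h i j (sameBlock_iff_mem_part.mpr hj)))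
    (by rw [hπ _ (π.part_mem.mpr (Finset.mem_univ i)),
      hπ' _ (π'.part_mem.mpr (Finset.mem_univ i))])

lemma exists_part_eq_pair (hπ : IsPairPartition π) (i : Fin n) :
    ∃ j, j ≠ i ∧ π.part i = {i, j} := by
  obtain ⟨a, b, hab, part_eq⟩ :=
    Finset.card_eq_two.mp (hπ _ (π.part_mem.mpr (Finset.mem_univ i)))
  have mem_part := π.mem_part (Finset.mem_univ i)
  rw [part_eq, Finset.mem_insert, Finset.mem_singleton] at mem_part
  obtain rfl | rfl := mem_part
  · exact ⟨b, hab.symm, part_eq⟩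
  · exact ⟨a, hab, part_eq.trans (Finset.pair_comm a i)⟩

/-- The other element of the block of `i` in a pair partition. -/
noncomputable def partner (hπ : IsPairPartition π) (i : Fin n) : Fin n :=
  (hπ.exists_part_eq_pair i).choose

variable (hπ : IsPairPartition π)

lemma partner_ne (i : Fin n) : hπ.partner i ≠ i :=
  (hπ.exists_part_eq_pair i).choose_spec.1

lemma sameBlock_iff : SameBlock π i j ↔ j = i ∨ j = hπ.partner i := by
  rw [sameBlock_iff_mem_part, (hπ.exists_part_eq_pair i).choose_spec.2, Finset.mem_insert,
    Finset.mem_singleton, partner]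

lemma sameBlock_partner (i : Fin n) : SameBlock π i (hπ.partner i) :=
  hπ.sameBlock_iff.mpr (.inr rfl)

lemma partner_involutive : Involutive hπ.partner := fun i =>
  ((hπ.sameBlock_iff.mp (hπ.sameBlock_partner i).symm).resolve_left (hπ.partner_ne i).symm).symm

end IsPairPartition

open Classical in
/-- The word recording which elements are the smaller ones in their pair. -/
noncomputable def openerWord (π : Finpartition (Finset.univ : Finset (Fin n))) (i : Fin n) :
    Bool :=
  decide (∃ j, i < j ∧ SameBlock π i j)

lemma openerWord_eq_true_iff (hπ : IsPairPartition π) :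
    openerWord π i = true ↔ i < hπ.partner i := by
  simp only [openerWord, decide_eq_true_eq, hπ.sameBlock_iff]
  constructor
  · rintro ⟨j, hij, rfl | rfl⟩
    · exact (hij.false).elim
    · exact hij
  · exact fun h => ⟨_, h, .inr rfl⟩

lemma openerWord_eq_false_iff (hπ : IsPairPartition π) :
    openerWord π i = false ↔ hπ.partner i < i := by
  rw [← Bool.not_eq_true, openerWord_eq_true_iff hπ, not_lt, (hπ.partner_ne i).le_iff_lt]

lemma sum_wordSteps_openerWord_eq_zero (hπ : IsPairPartition π) {S : Finset (Fin n)}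
    (hS : ∀ i ∈ S, hπ.partner i ∈ S) : ∑ i ∈ S, wordSteps (openerWord π) i = 0 := by
  refine Finset.sum_involution (fun i _ => hπ.partner i) (fun i _ => ?_)
    (fun i _ _ => hπ.partner_ne i) hS (fun i _ => hπ.partner_involutive i)
  have hi := openerWord_eq_true_iff hπ (i := i)
  have hpi := openerWord_eq_true_iff hπ (i := hπ.partner i)
  rw [hπ.partner_involutive i] at hpi
  simp only [wordSteps, hi, hpi]
  split_ifs with h h' h'
  · exact (h.not_gt h').elim
  · rfl
  · rfl
  · exact (hπ.partner_ne i (le_antisymm (not_lt.mp h) (not_lt.mp h'))).elim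

lemma sum_wordSteps_openerWord_nonneg (hπ : IsPairPartition π) {S : Finset (Fin n)}
    (hS : ∀ i ∈ S, hπ.partner i < i → hπ.partner i ∈ S) :
    0 ≤ ∑ i ∈ S, wordSteps (openerWord π) i := by
  rw [← Finset.sum_filter_add_sum_filter_not S fun i => hπ.partner i ∈ S,
    sum_wordSteps_openerWord_eq_zero hπ, zero_add]
  · refine Finset.sum_nonneg fun i hi => ?_
    rw [Finset.mem_filter] at hi
    rw [wordSteps, if_pos]
    · exact zero_le_one
    · by_contra h
      exact hi.2 (hS i hi.1 ((openerWord_eq_false_iff hπ).mp (Bool.eq_false_of_not_eq_true h)))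
  · intro i hi
    rw [Finset.mem_filter] at hi ⊢
    exact ⟨hi.2, by rw [hπ.partner_involutive i]; exact hi.1⟩

theorem isDyck_openerWord (hπ : IsPairPartition π) : IsDyck (openerWord π) := by
  refine ⟨fun p => sum_wordSteps_openerWord_nonneg hπ fun i hi hlt => ?_,
    sum_wordSteps_openerWord_eq_zero hπ fun i _ => Finset.mem_univ _⟩
  rw [Finset.mem_filter_univ] at hi ⊢
  exact (Fin.lt_def.mp hlt).trans hi

lemma lt_partner_and_partner_lt (hπ : IsPairPartition π) (hnc : IsNoncrossing π)
    (hij : i < j) (hj : j < hπ.partner i) : i < hπ.partner j ∧ hπ.partner j < hπ.partner i := by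
  have partner_ne_left : hπ.partner j ≠ i := by
    rintro rfl
    exact hj.ne (hπ.partner_involutive j).symm
  have partner_ne_right : hπ.partner j ≠ hπ.partner i :=
    hπ.partner_involutive.injective.ne hij.ne'
  constructor <;> by_contra! h
  · rcases hπ.sameBlock_iff.mp (hnc _ i j _ (h.lt_of_ne partner_ne_left) hij hj
      (hπ.sameBlock_partner j).symm (hπ.sameBlock_partner i)) with heq | heq
    · exact partner_ne_left heq.symm
    · exact hij.ne (heq.trans (hπ.partner_involutive j))
  · rcases hπ.sameBlock_iff.mp (hnc i j _ _ hij hj (h.lt_of_ne' partner_ne_right)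
      (hπ.sameBlock_partner i) (hπ.sameBlock_partner j)) with heq | heq
    · exact hij.ne' heq
    · exact hj.ne heq

/-- The elements between `i` and its partner are paired with each other, so the path neither goes
below its height after step `i` in between nor ends at a different height. -/
lemma arcRel_openerWord_partner (hπ : IsPairPartition π) (hnc : IsNoncrossing π)
    (hi : i < hπ.partner i) : ArcRel (openerWord π) i (hπ.partner i) := by
  have opener_i := (openerWord_eq_true_iff hπ).mpr hi
  have closer_partner : openerWord π (hπ.partner i) = false :=
    (openerWord_eq_false_iff hπ).mpr (by rwa [hπ.partner_involutive i])
  have height_succ_i := height_wordSteps_succ_of_true opener_i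
  have height_le {p : ℕ} (hip : (i : ℕ) + 1 ≤ p) (hp : p ≤ hπ.partner i) :
      height (wordSteps (openerWord π)) (i + 1) ≤ height (wordSteps (openerWord π)) p := by
    rw [← height_add_sum_Ico _ hip]
    refine le_add_of_nonneg_right (sum_wordSteps_openerWord_nonneg hπ fun j hj hlt => ?_)
    rw [Finset.mem_filter_univ] at hj ⊢
    have := lt_partner_and_partner_lt hπ hnc (i := i) (j := j) (by lia) (by lia)
    lia
  have height_eq : height (wordSteps (openerWord π)) (hπ.partner i) =
      height (wordSteps (openerWord π)) (i + 1) := by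
    rw [← height_add_sum_Ico _ (Nat.succ_le_iff.mpr hi), add_eq_left]
    refine sum_wordSteps_openerWord_eq_zero hπ fun j hj => ?_
    rw [Finset.mem_filter_univ] at hj ⊢
    have := lt_partner_and_partner_lt hπ hnc (i := i) (j := j) (by lia) (by lia)
    lia
  refine ⟨?_, fun p hp => ?_⟩
  · rw [level_of_true opener_i, level_of_false closer_partner,
      height_wordSteps_succ_of_false closer_partner, height_eq, height_succ_i, add_sub_cancel_right]
  · rw [Set.mem_uIoc] at hp
    rw [level_of_true opener_i]
    have := height_le (p := p) (by lia) (by lia)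
    lia

lemma arcRel_openerWord_of_sameBlock (hπ : IsPairPartition π) (hnc : IsNoncrossing π)
    (hij : SameBlock π i j) : ArcRel (openerWord π) i j := by
  obtain rfl | rfl := hπ.sameBlock_iff.mp hij
  · exact .refl _ _
  · obtain hi | hi := (hπ.partner_ne i).lt_or_gt
    · have := arcRel_openerWord_partner hπ hnc (i := hπ.partner i)
      rw [hπ.partner_involutive i] at this
      exact (this hi).symm
    · exact arcRel_openerWord_partner hπ hnc hi

variable {s : Fin n → Bool}

open Classical in
/-- The partition of the positions of a word into the arcs under its path. -/
noncomputable def arcPartition (s : Fin n → Bool) :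
    Finpartition (Finset.univ : Finset (Fin n)) :=
  Finpartition.ofSetoid ⟨ArcRel s, ArcRel.refl s, ArcRel.symm, ArcRel.trans⟩

lemma sameBlock_arcPartition : SameBlock (arcPartition s) i j ↔ ArcRel s i j := by
  classical
  rw [sameBlock_iff_mem_part, arcPartition, Finpartition.mem_part_ofSetoid_iff_rel]
  rfl

lemma isNoncrossing_arcPartition (s : Fin n → Bool) : IsNoncrossing (arcPartition s) := by
  intro i i' j j' hii' hi'j hjj' hij hi'j'
  rw [sameBlock_arcPartition] at hij hi'j'
  exact (hij.not_crossing hii' hi'j hjj' hi'j').elim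

lemma isPairPartition_arcPartition (hs : IsDyck s) : IsPairPartition (arcPartition s) := by
  intro B hB
  obtain ⟨i, hi⟩ := (arcPartition s).nonempty_of_mem_parts hB
  obtain ⟨j, hji, hij⟩ := hs.exists_ne_arcRel i
  refine Finset.card_eq_two.mpr ⟨i, j, hji.symm, Finset.ext fun l => ?_⟩
  rw [← (arcPartition s).part_eq_of_mem hB hi, ← sameBlock_iff_mem_part, sameBlock_arcPartition,
    Finset.mem_insert, Finset.mem_singleton]
  refine ⟨fun hil => ?_, ?_⟩
  · by_contra! hl
    have hsij := hij.ne_of_ne hji.symm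
    have hsil := hil.ne_of_ne hl.1.symm
    have hsjl := (hij.symm.trans hil).ne_of_ne hl.2.symm
    exact hsjl ((Bool.eq_not.mpr hsij.symm).trans (Bool.eq_not.mpr hsil.symm).symm)
  · rintro (rfl | rfl)
    · exact .refl s l
    · exact hij

lemma arcPartition_openerWord (hπ : IsPairPartition π) (hnc : IsNoncrossing π) :
    arcPartition (openerWord π) = π :=
  (hπ.eq_of_sameBlock_imp (isPairPartition_arcPartition (isDyck_openerWord hπ)) fun _ _ hij =>
    sameBlock_arcPartition.mpr (arcRel_openerWord_of_sameBlock hπ hnc hij)).symm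

lemma openerWord_arcPartition (hs : IsDyck s) : openerWord (arcPartition s) = s := by
  funext i
  rw [Bool.eq_iff_iff]
  simp only [openerWord, decide_eq_true_eq, sameBlock_arcPartition]
  exact ⟨fun ⟨j, hij, h⟩ => h.eq_true_left hij, hs.exists_arcRel_of_true⟩

/-- In each interval of length `d`, the down steps of the word precede the up steps. -/
def IsIntervalMonotone (d : ℕ) (s : Fin n → Bool) : Prop :=
  ∀ i j : Fin n, i ≤ j → (i : ℕ) / d = j / d → s i = true → s j = true

lemma isMPartite_iff {d : ℕ} :
    IsMPartite d π ↔ ∀ i j, SameBlock π i j → (i : ℕ) / d = j / d → i = j := by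
  simp only [IsMPartite, Finset.card_le_one, Finset.mem_filter]
  constructor
  · rintro h i j ⟨B, hB, hi, hj⟩ hij
    exact h B hB _ i ⟨hi, hij⟩ j ⟨hj, rfl⟩
  · rintro h B hB k i ⟨hi, hik⟩ j ⟨hj, hjk⟩
    exact h i j ⟨B, hB, hi, hj⟩ (hik.trans hjk.symm)

theorem isMPartite_iff_isIntervalMonotone_openerWord (hπ : IsPairPartition π)
    (hnc : IsNoncrossing π) {d : ℕ} :
    IsMPartite d π ↔ IsIntervalMonotone d (openerWord π) := by
  rw [isMPartite_iff]
  constructor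
  · intro h i j hij hdiv hi
    by_contra hj
    rw [openerWord_eq_true_iff hπ] at hi
    rw [Bool.not_eq_true, openerWord_eq_false_iff hπ] at hj
    have partner_j_lt : hπ.partner j < i := by
      by_contra! hle
      refine hj.ne (h j _ (hπ.sameBlock_partner j) ?_).symm
      exact le_antisymm (hdiv ▸ Nat.div_le_div_right hle) (Nat.div_le_div_right hj.le)
    have lt_partner_i : j < hπ.partner i := by
      by_contra! hle
      refine hi.ne (h i _ (hπ.sameBlock_partner i) ?_)
      exact le_antisymm (Nat.div_le_div_right hi.le) (hdiv ▸ Nat.div_le_div_right hle)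
    have hne : i ≠ j := by
      rintro rfl
      exact hi.not_gt hj
    rcases hπ.sameBlock_iff.mp (hnc _ i j _ partner_j_lt (hij.lt_of_ne hne) lt_partner_i
      (hπ.sameBlock_partner j).symm (hπ.sameBlock_partner i)) with heq | heq
    · exact partner_j_lt.ne' heq
    · exact hne (heq.trans (hπ.partner_involutive j))
  · intro h i j hij hdiv
    by_contra! hne
    wlog hlt : i < j generalizing i j
    · exact this j i hij.symm hdiv.symm hne.symm (hne.lt_or_gt.resolve_left hlt)
    have arc := arcRel_openerWord_of_sameBlock hπ hnc hij
    have := h i j hlt.le hdiv (arc.eq_true_left hlt)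
    simp [arc.eq_false_right hlt] at this

/-- The encoding of a noncrossing pair partition by the Dyck word of the smaller elements of its
pairs. Being multipartite means that in each interval the larger elements come first. -/
noncomputable def partitionEquivWord (n d : ℕ) :
    {π : Finpartition (Finset.univ : Finset (Fin n)) //
      IsNoncrossing π ∧ IsPairPartition π ∧ IsMPartite d π} ≃
    {s : Fin n → Bool // IsDyck s ∧ IsIntervalMonotone d s} where
  toFun π := ⟨openerWord π.1, isDyck_openerWord π.2.2.1,
    (isMPartite_iff_isIntervalMonotone_openerWord π.2.2.1 π.2.1).mp π.2.2.2⟩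
  invFun s := ⟨arcPartition s.1, isNoncrossing_arcPartition s.1,
    isPairPartition_arcPartition s.2.1,
    (isMPartite_iff_isIntervalMonotone_openerWord (isPairPartition_arcPartition s.2.1)
      (isNoncrossing_arcPartition s.1)).mpr (by rw [openerWord_arcPartition s.2.1]; exact s.2.2)⟩
  left_inv π := Subtype.ext (arcPartition_openerWord π.2.2.1 π.2.1)
  right_inv s := Subtype.ext (openerWord_arcPartition s.2.1)

end Partitions

section StageWords

variable {m d : ℕ} {s : Fin (m * d) → Bool}

/-- The word whose `i`-th interval of length `d` consists of `k i` down steps followed by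
`d - k i` up steps. -/
def stageWord (k : Fin m → Fin (d + 1)) (p : Fin (m * d)) : Bool :=
  decide ((k (finProdFinEquiv.symm p).1 : ℕ) ≤ (finProdFinEquiv.symm p).2)

lemma stageWord_finProdFinEquiv_eq_true_iff (k : Fin m → Fin (d + 1)) (i : Fin m) (r : Fin d) :
    stageWord k (finProdFinEquiv (i, r)) = true ↔ (k i : ℕ) ≤ r := by
  simp [stageWord]

lemma stageWord_eq_iff {k : Fin m → Fin (d + 1)} :
    stageWord k = s ↔ ∀ i r, s (finProdFinEquiv (i, r)) = true ↔ (k i : ℕ) ≤ r := by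
  rw [funext_iff, finProdFinEquiv.surjective.forall, Prod.forall]
  refine forall₂_congr fun i r => ?_
  rw [Bool.eq_iff_iff, stageWord_finProdFinEquiv_eq_true_iff]
  exact iff_comm

lemma isIntervalMonotone_iff :
    IsIntervalMonotone d s ↔ ∀ i, Monotone fun r => s (finProdFinEquiv (i, r)) = true := by
  have div_eq (i : Fin m) (r : Fin d) : (finProdFinEquiv (i, r) : ℕ) / d = i := by
    rw [finProdFinEquiv_apply_val, Nat.add_mul_div_left _ _ r.pos, Nat.div_eq_of_lt r.isLt,
      zero_add]
  have position_le_iff {i : Fin m} {r r' : Fin d} :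
      finProdFinEquiv (i, r) ≤ finProdFinEquiv (i, r') ↔ r ≤ r' := by
    simp only [Fin.le_def, finProdFinEquiv_apply_val, add_le_add_iff_right]
  simp only [IsIntervalMonotone, finProdFinEquiv.surjective.forall, Prod.forall, div_eq]
  constructor
  · intro h i r r' hrr'
    exact h i r i r' (position_le_iff.mpr hrr') rfl
  · intro h i r i' r' hle hii'
    obtain rfl := Fin.ext hii'
    exact h i (position_le_iff.mp hle)

lemma existsUnique_threshold {P : Fin d → Prop} (hP : Monotone P) :
    ∃! k : Fin (d + 1), ∀ r, P r ↔ (k : ℕ) ≤ r := by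
  classical
  have exists_bound : ∃ k : ℕ, ∀ r : Fin d, k ≤ r → P r := ⟨d, fun r hr => absurd hr (by lia)⟩
  obtain ⟨k, hk, min_k⟩ := Nat.findX exists_bound
  have hkd : k ≤ d := by
    by_contra! h
    exact min_k d h fun r hr => absurd hr (by lia)
  refine ⟨⟨k, by lia⟩, fun r => ⟨fun hr => ?_, hk r⟩, fun k' hk' => ?_⟩
  · by_contra! hrk
    exact min_k r hrk fun r' hr' => hP hr' hr
  · by_contra hne
    rcases Ne.lt_or_gt (mt Fin.ext hne) with hlt | hlt
    · exact min_k k' hlt fun r => (hk' r).mpr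
    · exact hlt.not_ge ((hk' ⟨k, by lia⟩).mp (hk _ le_rfl))

lemma existsUnique_stageWord_eq (hs : IsIntervalMonotone d s) : ∃! k, stageWord k = s := by
  simp only [stageWord_eq_iff]
  choose k hk using fun i => existsUnique_threshold (isIntervalMonotone_iff.mp hs i)
  exact ⟨k, fun i => (hk i).1, fun k' hk' => funext fun i => (hk i).2 _ (hk' i)⟩

lemma isIntervalMonotone_stageWord (k : Fin m → Fin (d + 1)) :
    IsIntervalMonotone d (stageWord k) := by
  simp only [isIntervalMonotone_iff, stageWord_finProdFinEquiv_eq_true_iff]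
  exact fun i r r' hrr' hr => hr.trans hrr'

lemma height_wordSteps_stageWord_add (k : Fin m → Fin (d + 1)) (i : Fin m) {r : ℕ} (hr : r ≤ d) :
    height (wordSteps (stageWord k)) (d * i + r) =
      height (wordSteps (stageWord k)) (d * i) + max (-r : ℤ) (r - 2 * k i) := by
  induction r with
  | zero => simp
  | succ r ih =>
    have position : (finProdFinEquiv (i, ⟨r, hr⟩) : ℕ) = d * i + r := add_comm _ _
    have opener_iff := stageWord_finProdFinEquiv_eq_true_iff k i ⟨r, hr⟩
    rw [← add_assoc, ← position, height_succ, position, ih (by lia), wordSteps]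
    simp only [opener_iff]
    split_ifs <;> push_cast <;> omega

lemma height_wordSteps_stageWord_mul (k : Fin m → Fin (d + 1)) {i : ℕ} (hi : i ≤ m) :
    height (wordSteps (stageWord k)) (d * i) = height (stageSteps k) i := by
  induction i with
  | zero => simp
  | succ i ih =>
    have height_stage : height (wordSteps (stageWord k)) (d * i + d) =
        height (wordSteps (stageWord k)) (d * i) + max (-d : ℤ) (d - 2 * k ⟨i, hi⟩) :=
      height_wordSteps_stageWord_add k ⟨i, hi⟩ le_rfl
    have height_stageSteps : height (stageSteps k) (i + 1) =
        height (stageSteps k) i + ((d : ℤ) - 2 * k ⟨i, hi⟩) :=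
      height_succ (stageSteps k) ⟨i, hi⟩
    rw [mul_add_one, height_stage, height_stageSteps, ih (by lia), max_eq_right (by omega)]

lemma isDyck_stageWord_iff {k : Fin m → Fin (d + 1)} :
    IsDyck (stageWord k) ↔ IsAdmissible k ∧ ∑ i, stageSteps k i = 0 := by
  have sum_eq : ∑ p, wordSteps (stageWord k) p = ∑ i, stageSteps k i := by
    rw [← height_of_le _ (mul_comm m d).le, height_wordSteps_stageWord_mul k le_rfl,
      height_of_le _ le_rfl]
  rw [IsDyck, sum_eq]
  refine and_congr_left fun hsum => ⟨fun h i => ?_, fun h p => ?_⟩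
  · have := h (d * i + k i)
    rw [height_wordSteps_stageWord_add k i (by lia), height_wordSteps_stageWord_mul k i.isLt.le]
      at this
    lia
  · obtain hp | hp := le_or_gt (m * d) p
    · rw [height_of_le _ hp, sum_eq, hsum]
    · have hd : 0 < d := pos_of_mul_pos_right (p.zero_le.trans_lt hp) m.zero_le
      let i : Fin m := ⟨p / d, Nat.div_lt_of_lt_mul (mul_comm m d ▸ hp)⟩
      rw [← Nat.div_add_mod p d, height_wordSteps_stageWord_add k i (p.mod_lt hd).le,
        height_wordSteps_stageWord_mul k i.isLt.le]
      have := h i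
      lia

theorem card_isDyck_isIntervalMonotone (m d : ℕ) :
    Nat.card {s : Fin (m * d) → Bool // IsDyck s ∧ IsIntervalMonotone d s} =
      admissibleCount m d 0 := by
  let word : {k : Fin m → Fin (d + 1) // IsAdmissible k ∧ ∑ i, stageSteps k i = 0} →
      {s : Fin (m * d) → Bool // IsDyck s ∧ IsIntervalMonotone d s} := fun k =>
    ⟨stageWord k.1, isDyck_stageWord_iff.mpr k.2, isIntervalMonotone_stageWord k.1⟩
  refine (Nat.card_eq_of_bijective word ((bijective_iff_existsUnique word).mpr ?_)).symm
  rintro ⟨s, hs, hmono⟩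
  obtain ⟨k, rfl, unique_k⟩ := existsUnique_stageWord_eq hmono
  exact ⟨⟨k, isDyck_stageWord_iff.mp hs⟩, rfl,
    fun k' hk' => Subtype.ext (unique_k _ (congrArg Subtype.val hk'))⟩

end StageWords

/-- The dimension of the space `T^m(R_d^*)^G` of `SL(2,ℂ)`-invariant `m`-linear forms on
binary forms of degree `d` equals the number of `m`-partite noncrossing pair partitions
of `{1, ..., md}`. -/
theorem dim_invariants_eq_card_noncrossing (m d : ℕ) (hm : 1 ≤ m) (hd : 1 ≤ d) :
    Module.finrank ℂ (invariantForms d m) =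
      Nat.card {π : Finpartition (Finset.univ : Finset (Fin (m * d))) //
        IsNoncrossing π ∧ IsPairPartition π ∧ IsMPartite d π} := by
  rw [Nat.card_congr (partitionEquivWord (m * d) d), card_isDyck_isIntervalMonotone]
  exact finrank_invariantForms_eq_admissibleCount m (by lia)
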